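/- If M is 2γ-proximally smooth, then the projection operator P_M is 2-Lipschitz continuous on the closed γ-tube: ‖P_M(x) − P_M(y)‖ ≤ 2‖x − y‖ for all x, y ∈ Ū_M(γ). -/

import Mathlib

open Metric

noncomputable section

/-- `ℝ^{d×k}` with the Frobenius inner product and norm. -/
abbrev Mat (d k : ℕ) : Type := EuclideanSpace ℝ (Fin d × Fin k)

/-- `p` is a nearest point to `x` on `M`, i.e. a projection point `p ∈ P_M(x)`. -/
def IsNearestPt {d k : ℕ} (M : Set (Mat d k)) (x p : Mat d k) : Prop :=
  p ∈ M ∧ ∀ u ∈ M, ‖x - p‖ ≤ ‖x - u‖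

/-!
Write `d` for the distance to `M`. At a point `z` off `M` with a unique nearest point `p`, moving
away from `p` increases `d` at unit speed. Hence `d` grows by `T` somewhere on every closed ball of
radius `T` whose points stay in the tube, and strict convexity forces this to happen on the ray
from `P_M(x)` through `x`. So `P_M(x)` remains a nearest point of the points of this ray up to
distance `r`, which says that balls of radius `r` touching `M` at `P_M(x)` contain no point of `M`:
`2r⟪x - P_M(x), q - P_M(x)⟫ ≤ d(x)‖q - P_M(x)‖²` for `q ∈ M`. Adding this inequality for `x` and
for `y` gives the Lipschitz bound.
-/

open Filter Set Topology
open scoped RealInnerProductSpace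

section MetricProjection

variable {X : Type*} [PseudoMetricSpace X]

/-- The set-valued metric projection `P_M(x)`: the points of `M` realising the distance from `x`.
Membership in `M` is part of the definition, so the value is `∅` when the distance is not
attained. -/
def metricProjection (M : Set X) (x : X) : Set X :=
  {p | p ∈ M ∧ dist x p = infDist x M}

/-- `M` is `r`-proximally smooth: `P_M(x)` is a singleton for every `x` at distance less than `r`
from `M`. -/
def IsProximallySmooth (M : Set X) (r : ℝ) : Prop :=
  ∀ x, infDist x M < r → ∃ p, metricProjection M x = {p}

theorem mem_metricProjection_iff_forall_dist_le {M : Set X} {x p : X} :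
    p ∈ metricProjection M x ↔ p ∈ M ∧ ∀ u ∈ M, dist x p ≤ dist x u := by
  refine and_congr_right fun hp =>
    ⟨fun h u hu => h.le.trans (infDist_le_dist_of_mem hu), fun h => ?_⟩
  exact le_antisymm ((le_infDist ⟨p, hp⟩).2 fun u hu => h u hu) (infDist_le_dist_of_mem hp)

theorem upperHemicontinuous_metricProjection [ProperSpace X] {M : Set X} (hM : IsClosed M) :
    UpperHemicontinuous (metricProjection M) := by
  intro x
  have hbdd : ∀ᶠ x' in 𝓝 x, metricProjection M x' ⊆ closedBall x (infDist x M + 2) := by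
    filter_upwards [ball_mem_nhds x one_pos] with x' hx' p hp
    have hx'x : dist x' x < 1 := hx'
    rw [mem_closedBall, dist_comm]
    linarith [dist_triangle_left x p x', hp.2,
      infDist_le_infDist_add_dist (s := M) (x := x') (y := x)]
  refine UpperHemicontinuousAt.of_sequences (isCompact_closedBall _ _).isSeqCompact hbdd
    fun u hu v hv p hp => ⟨?_, ?_⟩
  · exact hM.mem_of_tendsto hp (.of_forall fun n => (hv n).1)
  · refine tendsto_nhds_unique (hu.dist hp) ?_
    simpa only [(hv _).2, Function.comp_def] using ((continuous_infDist_pt M).tendsto x).comp hu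

theorem exists_mem_closedBall_add_le_of_frequently_lt [ProperSpace X]
    {f : X → ℝ} {x : X} {T : ℝ} (hT : 0 ≤ T) (hf : ContinuousOn f (closedBall x T))
    (hasc : ∀ z ∈ ball x T, f x ≤ f z → ∀ c < 1, ∃ᶠ z' in 𝓝 z, f z + c * dist z' z < f z') :
    ∃ w ∈ closedBall x T, f x + T ≤ f w := by
  have hx : x ∈ closedBall x T := mem_closedBall_self hT
  obtain ⟨w, hw, hwmax⟩ := (isCompact_closedBall x T).exists_isMaxOn ⟨x, hx⟩ hf
  refine ⟨w, hw, ?_⟩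
  by_contra! hlt
  have hxw : f x ≤ f w := hwmax hx
  have hTpos : 0 < T := by linarith
  obtain ⟨c, hwc, hc1⟩ := exists_between ((div_lt_one hTpos).2 (sub_lt_iff_lt_add'.2 hlt))
  have hc0 : 0 ≤ c := (div_nonneg (sub_nonneg.2 hxw) hTpos.le).trans hwc.le
  rw [div_lt_iff₀ hTpos] at hwc
  -- A maximum of the penalised function in the open ball contradicts ascent at speed above `c`.
  obtain ⟨z, hz, hzmax⟩ := (isCompact_closedBall x T).exists_isMaxOn ⟨x, hx⟩
    (hf.sub (f := f) (g := fun z => c * dist z x) (by fun_prop))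
  have hxz : f x + c * dist z x ≤ f z := by
    simpa [le_sub_iff_add_le] using hzmax hx
  have hzw : f z ≤ f w := hwmax hz
  have hzball : z ∈ ball x T := lt_of_mul_lt_mul_left (by linarith) hc0
  have hxz' : f x ≤ f z := by linarith [mul_nonneg hc0 (dist_nonneg (x := z) (y := x))]
  obtain ⟨z', hz', hz'ball⟩ :=
    ((hasc z hzball hxz' c hc1).and_eventually (isOpen_ball.mem_nhds hzball)).exists
  have hz'z : f z' - c * dist z' x ≤ f z - c * dist z x := hzmax (ball_subset_closedBall hz'ball)
  linarith [mul_le_mul_of_nonneg_left (dist_triangle z' z x) hc0]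

end MetricProjection

theorem IsProximallySmooth.isClosed {X : Type*} [MetricSpace X] {M : Set X} {r : ℝ}
    (hM : IsProximallySmooth M r) (hr : 0 < r) : IsClosed M := by
  refine isClosed_of_closure_subset fun x hx => ?_
  have hx0 : infDist x M = 0 := infDist_zero_of_mem_closure hx
  obtain ⟨p, hp⟩ := hM x (hx0.trans_lt hr)
  obtain ⟨hpM, hxp⟩ : p ∈ metricProjection M x := hp ▸ mem_singleton p
  exact eq_of_dist_eq_zero (hxp.trans hx0) ▸ hpM

section InnerProductSpace

variable {E : Type*} [NormedAddCommGroup E] [InnerProductSpace ℝ E] {M : Set E} {r : ℝ}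
  {x p q : E}

theorem norm_add_mul_norm_lt_norm_add_of_lt_inner {v w : E} {c : ℝ}
    (h : c * ‖v‖ * ‖w‖ < ⟪v, w⟫) : ‖w‖ + c * ‖v‖ < ‖w + v‖ := by
  have hw : 0 < ‖w‖ := norm_pos_iff.2 fun hw => by simp [hw] at h
  refine lt_of_mul_lt_mul_right ?_ hw.le
  calc (‖w‖ + c * ‖v‖) * ‖w‖ = ‖w‖ * ‖w‖ + c * ‖v‖ * ‖w‖ := add_mul _ _ _
    _ < ⟪w, w⟫ + ⟪v, w⟫ := by rw [real_inner_self_eq_norm_mul_norm]; gcongr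
    _ = ⟪w + v, w⟫ := (inner_add_left _ _ _).symm
    _ ≤ ‖w + v‖ * ‖w‖ := real_inner_le_norm _ _

theorem two_mul_inner_le_of_mem_metricProjection (hp : p ∈ metricProjection M x) (hq : q ∈ M) :
    2 * ⟪x - p, q - p⟫ ≤ ‖q - p‖ ^ 2 := by
  have hle : ‖x - p‖ ≤ ‖(x - p) - (q - p)‖ := by
    simpa only [sub_sub_sub_cancel_right, dist_eq_norm] using
      (mem_metricProjection_iff_forall_dist_le.1 hp).2 q hq
  have hsq : ‖x - p‖ ^ 2 ≤ ‖(x - p) - (q - p)‖ ^ 2 := by gcongr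
  rw [norm_sub_sq_real (x - p)] at hsq
  linarith

variable [ProperSpace E]

theorem frequently_infDist_add_lt_infDist (hM : IsClosed M) (hp : metricProjection M x = {p})
    (hxp : x ≠ p) {c : ℝ} (hc : c < 1) :
    ∃ᶠ x' in 𝓝 x, infDist x M + c * dist x' x < infDist x' M := by
  have hpM : p ∈ M := (hp ▸ mem_singleton p : p ∈ metricProjection M x).1
  have hsubset : ∀ᶠ x' in 𝓝 x,
      metricProjection M x' ⊆ {q | c * ‖x - p‖ * ‖x - q‖ < ⟪x - p, x - q⟫} := by
    refine upperHemicontinuousAt_iff_forall_isOpen.1 (upperHemicontinuous_metricProjection hM x) _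
      (isOpen_lt (by fun_prop) (by fun_prop)) ?_
    have hpos : 0 < ‖x - p‖ := norm_pos_iff.2 (sub_ne_zero.2 hxp)
    rw [hp, singleton_subset_iff, mem_ofPred_eq, real_inner_self_eq_norm_mul_norm]
    gcongr
    exact mul_lt_of_lt_one_left hpos hc
  have hray : Tendsto (fun t : ℝ => x + t • (x - p)) (𝓝[>] 0) (𝓝 x) := by
    refine Tendsto.mono_left ?_ nhdsWithin_le_nhds
    exact Continuous.tendsto' (by fun_prop) _ _ (by simp)
  refine hray.frequently (Eventually.frequently ?_)
  filter_upwards [hray.eventually hsubset, self_mem_nhdsWithin] with t ht htpos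
  obtain ⟨q, hqM, hq⟩ := hM.exists_infDist_eq_dist ⟨p, hpM⟩ (x + t • (x - p))
  have hinner : c * ‖x - p‖ * ‖x - q‖ < ⟪x - p, x - q⟫ := ht ⟨hqM, hq.symm⟩
  have hgain : ‖x - q‖ + c * ‖t • (x - p)‖ < ‖x - q + t • (x - p)‖ := by
    refine norm_add_mul_norm_lt_norm_add_of_lt_inner ?_
    rw [norm_smul_of_nonneg (le_of_lt htpos), real_inner_smul_left]
    linarith [mul_lt_mul_of_pos_left hinner htpos]
  have hxq : infDist x M ≤ dist x q := infDist_le_dist_of_mem hqM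
  rw [hq, dist_eq_norm (x + _) q, add_sub_right_comm, dist_eq_norm, add_sub_cancel_left]
  linarith [dist_eq_norm x q]

namespace IsProximallySmooth

theorem exists_mem_closedBall_infDist_add_le (hM : IsProximallySmooth M r) {T : ℝ} (hT : 0 ≤ T)
    (hx : 0 < infDist x M) (hxr : infDist x M + T ≤ r) :
    ∃ z ∈ closedBall x T, infDist x M + T ≤ infDist z M := by
  refine exists_mem_closedBall_add_le_of_frequently_lt hT (continuous_infDist_pt M).continuousOn
    fun z hz hxz c hc => ?_
  have hzr : infDist z M < r := by
    linarith [mem_ball.1 hz, infDist_le_infDist_add_dist (s := M) (x := z) (y := x)]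
  obtain ⟨p, hp⟩ := hM z hzr
  have hzp : dist z p = infDist z M := (hp ▸ mem_singleton p : p ∈ metricProjection M z).2
  exact frequently_infDist_add_lt_infDist (hM.isClosed (by linarith)) hp
    (dist_pos.1 (by linarith)) hc

theorem mem_metricProjection_lineMap (hM : IsProximallySmooth M r)
    (hp : p ∈ metricProjection M x) {s : ℝ} (hs : 1 ≤ s) (hsr : s * infDist x M ≤ r) :
    p ∈ metricProjection M (AffineMap.lineMap p x s) := by
  obtain hx | hx := (infDist_nonneg (x := x) (s := M)).eq_or_lt
  · obtain rfl : x = p := eq_of_dist_eq_zero (hp.2.trans hx.symm)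
    rwa [AffineMap.lineMap_same_apply]
  have hs0 : 0 < s := by linarith
  obtain ⟨z, hzx, hz⟩ := hM.exists_mem_closedBall_infDist_add_le
    (mul_nonneg (sub_nonneg.2 hs) hx.le) hx (by linarith)
  rw [mem_closedBall] at hzx
  have hzp : infDist z M ≤ dist z p := infDist_le_dist_of_mem hp.1
  have htri : dist z p ≤ dist z x + dist x p := dist_triangle z x p
  have hdist_zx : dist z x = (s - 1) * infDist x M := by linarith [hp.2]
  have hdist_zp : dist z p = s * infDist x M := by linarith [hp.2]
  -- The triangle inequality `htri` is an equality, so `x` lies between `p` and `z`.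
  have hx_eq : x = AffineMap.lineMap p z s⁻¹ := by
    apply eq_lineMap_of_dist_eq_mul_of_dist_eq_mul
    · rw [dist_comm, hp.2, dist_comm, hdist_zp, inv_mul_cancel_left₀ hs0.ne']
    · rw [dist_comm, hdist_zx, dist_comm, hdist_zp]
      field_simp
  have hz_eq : AffineMap.lineMap p x s = z := by
    rw [hx_eq, AffineMap.lineMap_lineMap_right, mul_inv_cancel₀ hs0.ne',
      AffineMap.lineMap_apply_one]
  exact hz_eq ▸ ⟨hp.1, by linarith [hp.2]⟩

theorem two_mul_radius_mul_inner_le (hM : IsProximallySmooth M r) (hx : infDist x M < r)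
    (hp : p ∈ metricProjection M x) (hq : q ∈ M) :
    2 * r * ⟪x - p, q - p⟫ ≤ infDist x M * ‖q - p‖ ^ 2 := by
  obtain hx0 | hx0 := (infDist_nonneg (x := x) (s := M)).eq_or_lt
  · obtain rfl : x = p := eq_of_dist_eq_zero (hp.2.trans hx0.symm)
    simp [← hx0]
  have hray := hM.mem_metricProjection_lineMap hp ((one_le_div hx0).2 hx.le)
    (div_mul_cancel₀ r hx0.ne').le
  have hinner := two_mul_inner_le_of_mem_metricProjection hray hq
  rw [← vsub_eq_sub (AffineMap.lineMap _ _ _), AffineMap.lineMap_vsub_left, vsub_eq_sub,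
    real_inner_smul_left] at hinner
  calc 2 * r * ⟪x - p, q - p⟫
      = infDist x M * (2 * (r / infDist x M * ⟪x - p, q - p⟫)) := by field_simp
    _ ≤ infDist x M * ‖q - p‖ ^ 2 := by gcongr

end IsProximallySmooth

theorem projection_two_lipschitz_on_tube_general (hM : IsProximallySmooth M r) {ρ : ℝ}
    (hρ : ρ < r) {y : E} (hx : infDist x M ≤ ρ) (hy : infDist y M ≤ ρ)
    (hp : p ∈ metricProjection M x) (hq : q ∈ metricProjection M y) :
    ‖p - q‖ ≤ r / (r - ρ) * ‖x - y‖ := by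
  have hr : 0 ≤ r := infDist_nonneg.trans (hx.trans hρ.le)
  have hpq : 2 * r * ⟪x - p, q - p⟫ ≤ ρ * ‖p - q‖ ^ 2 := by
    rw [norm_sub_rev p q]
    exact (hM.two_mul_radius_mul_inner_le (hx.trans_lt hρ) hp hq.1).trans (by gcongr)
  have hqp : 2 * r * ⟪y - q, p - q⟫ ≤ ρ * ‖p - q‖ ^ 2 :=
    (hM.two_mul_radius_mul_inner_le (hy.trans_lt hρ) hq hp.1).trans (by gcongr)
  have hsum : ⟪x - p, q - p⟫ + ⟪y - q, p - q⟫ = ‖p - q‖ ^ 2 - ⟪x - y, p - q⟫ := by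
    rw [← real_inner_self_eq_norm_sq, ← neg_sub p q, inner_neg_right]
    simp only [inner_sub_left]
    ring
  have hsq : (r - ρ) * ‖p - q‖ * ‖p - q‖ ≤ r * ‖x - y‖ * ‖p - q‖ := by
    have hcs := mul_le_mul_of_nonneg_left (real_inner_le_norm (x - y) (p - q)) hr
    linear_combination hcs + (hpq + hqp) / 2 - r * hsum
  rw [div_mul_eq_mul_div, le_div_iff₀' (sub_pos.2 hρ)]
  obtain h0 | hpos := (norm_nonneg (p - q)).eq_or_lt
  · rw [← h0, mul_zero]
    positivity
  · exact le_of_mul_le_mul_right hsq hpos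

end InnerProductSpace

theorem mem_metricProjection_iff_isNearestPt {d k : ℕ} {M : Set (Mat d k)} {x p : Mat d k} :
    p ∈ metricProjection M x ↔ IsNearestPt M x p := by
  simp only [mem_metricProjection_iff_forall_dist_le, IsNearestPt, dist_eq_norm]

theorem isProximallySmooth_of_isNearestPt {d k : ℕ} {M : Set (Mat d k)} {r : ℝ}
    {P : Mat d k → Mat d k} (hP : ∀ x, infDist x M < r → IsNearestPt M x (P x))
    (hprox : ∀ x, infDist x M < r → ∀ p, IsNearestPt M x p → p = P x) :
    IsProximallySmooth M r := fun x hx =>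
  ⟨P x, eq_singleton_iff_unique_mem.2 ⟨mem_metricProjection_iff_isNearestPt.2 (hP x hx),
    fun p hp => hprox x hx p (mem_metricProjection_iff_isNearestPt.1 hp)⟩⟩

/-- If the compact set `M` is `2γ`-proximally smooth (the projection is single-valued on the
open `2γ`-tube around `M`), then the projection operator `P_M` is `2`-Lipschitz continuous
on the closed `γ`-tube: `‖P_M x - P_M y‖ ≤ 2‖x - y‖` for all `x, y ∈ Ū_M(γ)`. -/
theorem projection_two_lipschitz_on_tube
    {d k : ℕ} (M : Set (Mat d k)) (hMne : M.Nonempty) (hMcpt : IsCompact M)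
    (γ : ℝ) (hγ : 0 < γ)
    (P : Mat d k → Mat d k) (hP : ∀ x, IsNearestPt M x (P x))
    (hprox : ∀ x : Mat d k, infDist x M < 2 * γ → ∀ p, IsNearestPt M x p → p = P x) :
    ∀ x y : Mat d k, infDist x M ≤ γ → infDist y M ≤ γ →
      ‖P x - P y‖ ≤ 2 * ‖x - y‖ := by
  intro x y hx hy
  have hM := isProximallySmooth_of_isNearestPt (fun x _ => hP x) hprox
  have hmem := fun x => mem_metricProjection_iff_isNearestPt.2 (hP x)
  have hratio : 2 * γ / (2 * γ - γ) = 2 := by field_simp; ring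
  exact hratio ▸ projection_two_lipschitz_on_tube_general hM (by linarith) hx hy (hmem x) (hmem y)
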